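/- Let K be a field of characteristic 2, n ≥ 2, and P ∈ Sp(2n, K) a nonscalar matrix. Then there exists Q ∈ Sp(2n, K) such that the upper-left n×n block of Q P Q⁻¹ equals the identity matrix Iₙ. -/

import Mathlib

open Matrix

noncomputable section

/-- The standard symplectic form matrix `G = [[0, Iₙ], [-Iₙ, 0]]`. -/
def sympJ (n : ℕ) (K : Type*) [Field K] : Matrix (Fin n ⊕ Fin n) (Fin n ⊕ Fin n) K :=
  Matrix.fromBlocks 0 1 (-1) 0

/-- Membership in the standard symplectic group `Sp(2n, K)`: `P G Pᵀ = G`. -/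
def IsSymplectic {n : ℕ} {K : Type*} [Field K]
    (P : Matrix (Fin n ⊕ Fin n) (Fin n ⊕ Fin n) K) : Prop :=
  P * sympJ n K * Pᵀ = sympJ n K

/-!
Let `B` be the alternating form with Gram matrix `G`, let `g` be the isometry given by `P`, and put
`S = g + g⁻¹` and `D = g - 1`. The operator `S` is self-adjoint with `B x (S x) = 0`, and in
characteristic two `D² = g S` and `B (D x) (D y) = B x (S y)`.

Suppose that `L` is an `S`-stable Lagrangian with `L ∩ D L = 0`. Then `D L` is isotropic, so it
lies in a Lagrangian complement `M` of `L`. For a basis `e` of `L` and the dual basis `f` of `M`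
this gives `B (g eᵢ) fⱼ = B eᵢ fⱼ + B (D eᵢ) fⱼ = δᵢⱼ`, and the matrix `Q` with rows `e`, `f` is
as required.

To find `L`, decompose the space into orthogonally indecomposable `g`-stable summands. For isotropic
`S`-stable `L` the subspace `L + D L` is `g`-stable, so on an indecomposable summand it is enough
to make it nondegenerate. By Fitting's lemma each polynomial in `S` is there nilpotent or injective.
* If `q(S)ᵏ⁺¹ = 0` with `q` irreducible and `B (D e) (q(S)ᵏ e) ≠ 0`, then `L = K[S] e` works. Such
  an `e` exists if `S` is injective and `q(S)ᵏ ≠ 0`, since otherwise polarization yields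
  `S q(S)ᵏ = 0`.
* Otherwise `Sᵏ⁺¹ = 0 ≠ Sᵏ` and `B (D x) (Sᵏ x) = 0` for all `x`. If `D Sᵏ e ≠ 0`, then
  `L = K[S] e + K[S] w` works for some `w` orthogonal to `K[S] e` with `B (D Sᵏ e) w ≠ 0`.
* If moreover `D Sᵏ = 0`, take `L = K[S] e + K[S] D w` with `B (Sᵏ e) w ≠ 0`. Here `L + D L` has a
  one-dimensional radical, spanned by `Sᵏ e`, and adjoining `w` makes it nondegenerate.
-/

open Polynomial
open LinearMap (BilinForm)

section Cyclic

variable {R M : Type*} [CommRing R] [AddCommGroup M] [Module R M] {T : Module.End R M}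
  {A : Submodule R M} {e w : M}

/-- The cyclic submodule `R[T] e` generated by a vector `e` under an endomorphism `T`. -/
def cyclicSubmodule (T : Module.End R M) (e : M) : Submodule R M :=
  LinearMap.range (LinearMap.applyₗ e ∘ₗ (aeval T).toLinearMap)

theorem self_mem_cyclicSubmodule (T : Module.End R M) (e : M) : e ∈ cyclicSubmodule T e :=
  ⟨1, by simp⟩

theorem cyclicSubmodule_mem_invtSubmodule (T : Module.End R M) (e : M) :
    cyclicSubmodule T e ∈ T.invtSubmodule := by
  rintro _ ⟨p, rfl⟩
  exact ⟨X * p, by simp⟩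

theorem cyclicSubmodule_le (hA : A ∈ T.invtSubmodule) (he : e ∈ A) : cyclicSubmodule T e ≤ A := by
  rintro _ ⟨p, rfl⟩
  exact aeval_apply_smul_mem_of_le_comap he p T hA

theorem cyclicSubmodule_zero (T : Module.End R M) : cyclicSubmodule T 0 = ⊥ :=
  le_bot_iff.mp (cyclicSubmodule_le (Module.End.invtSubmodule.bot_mem T) (zero_mem _))

theorem cyclicSubmodule_le_span_singleton {T : Module.End R M} (hT : T e = 0) :
    cyclicSubmodule T e ≤ R ∙ e := by
  refine cyclicSubmodule_le (fun x hx ↦ ?_) (Submodule.mem_span_singleton_self e)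
  obtain ⟨c, rfl⟩ := Submodule.mem_span_singleton.mp hx
  simp [hT]

theorem X_pow_dvd_of_aeval_apply_add_mem (hA : A ∈ T.invtSubmodule) {m : ℕ}
    (he : (T ^ (m + 1)) e ∈ A) (hw : (T ^ (m + 1)) w ∈ A)
    (hew : ∀ a b : R, a • (T ^ m) e + b • (T ^ m) w ∈ A → a = 0 ∧ b = 0) {p r : R[X]}
    (hpr : aeval T p e + aeval T r w ∈ A) {j : ℕ} (hj : j ≤ m + 1) : X ^ j ∣ p ∧ X ^ j ∣ r := by
  induction j with
  | zero => simp
  | succ j ih =>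
    obtain ⟨⟨p, rfl⟩, ⟨r, rfl⟩⟩ := ih (by lia)
    have hT (s : R[X]) (v : M) : (T ^ (m - j)) (aeval T (X ^ j * s) v) =
        s.coeff 0 • (T ^ m) v + aeval T s.divX ((T ^ (m + 1)) v) := by
      have hs : X ^ (m - j) * (X ^ j * s) = C (s.coeff 0) * X ^ m + s.divX * X ^ (m + 1) := by
        rw [← mul_assoc, ← pow_add, Nat.sub_add_cancel (by lia)]
        nth_rw 1 [← divX_mul_X_add s]
        ring
      simpa using congr(aeval T $hs v)
    have h := aeval_apply_smul_mem_of_le_comap hpr (X ^ (m - j)) T hA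
    simp only [map_add, map_pow, aeval_X] at h
    rw [hT, hT, add_add_add_comm,
      A.add_mem_iff_left (add_mem (aeval_apply_smul_mem_of_le_comap he _ T hA)
        (aeval_apply_smul_mem_of_le_comap hw _ T hA))] at h
    obtain ⟨hp, hr⟩ := hew _ _ h
    simp only [pow_succ]
    exact ⟨mul_dvd_mul_left _ (X_dvd_iff.mpr hp), mul_dvd_mul_left _ (X_dvd_iff.mpr hr)⟩

theorem cyclicSubmodule_sup_inf_le (hA : A ∈ T.invtSubmodule) {m : ℕ}
    (he : (T ^ (m + 1)) e ∈ A) (hw : (T ^ (m + 1)) w ∈ A)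
    (hew : ∀ a b : R, a • (T ^ m) e + b • (T ^ m) w ∈ A → a = 0 ∧ b = 0) :
    (cyclicSubmodule T e ⊔ cyclicSubmodule T w) ⊓ A ≤
      cyclicSubmodule T ((T ^ (m + 1)) e) ⊔ cyclicSubmodule T ((T ^ (m + 1)) w) := by
  rintro x ⟨hx, hxA⟩
  obtain ⟨_, ⟨p, rfl⟩, _, ⟨r, rfl⟩, rfl⟩ := Submodule.mem_sup.mp hx
  obtain ⟨⟨p, rfl⟩, ⟨r, rfl⟩⟩ :=
    X_pow_dvd_of_aeval_apply_add_mem hA he hw hew hxA le_rfl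
  exact add_mem (Submodule.mem_sup_left ⟨p, by simp [mul_comm _ p]⟩)
    (Submodule.mem_sup_right ⟨r, by simp [mul_comm _ r]⟩)

end Cyclic

section CyclicField

variable {K V : Type*} [Field K] [AddCommGroup V] [Module K V] {T : Module.End K V}
  {A : Submodule K V} {e : V}

theorem pow_succ_dvd_of_aeval_apply_mem {q : K[X]} (hq : Irreducible q) (hA : A ∈ T.invtSubmodule)
    {m : ℕ} (he : aeval T (q ^ m) e ∉ A) (he' : aeval T (q ^ (m + 1)) e ∈ A) {p : K[X]}
    (hp : aeval T p e ∈ A) : q ^ (m + 1) ∣ p := by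
  classical
  obtain ⟨i, hi, hgcd⟩ := (dvd_prime_pow hq.prime _).mp
    (EuclideanDomain.gcd_dvd_left (q ^ (m + 1)) p)
  obtain him | rfl : i ≤ m ∨ i = m + 1 := by lia
  · obtain ⟨r, hr⟩ := hgcd.dvd.trans (pow_dvd_pow q him)
    have bezout : q ^ m = r * EuclideanDomain.gcdA (q ^ (m + 1)) p * q ^ (m + 1) +
        r * EuclideanDomain.gcdB (q ^ (m + 1)) p * p := by
      rw [hr, EuclideanDomain.gcd_eq_gcd_ab]
      ring
    refine absurd ?_ he
    rw [bezout, map_add, map_mul, map_mul _ _ p]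
    exact add_mem (aeval_apply_smul_mem_of_le_comap he' _ T hA)
      (aeval_apply_smul_mem_of_le_comap hp _ T hA)
  · exact hgcd.symm.dvd.trans (EuclideanDomain.gcd_dvd_right _ _)

theorem cyclicSubmodule_inf_le {q : K[X]} (hq : Irreducible q) (hA : A ∈ T.invtSubmodule) {m : ℕ}
    (he : aeval T (q ^ m) e ∉ A) (he' : aeval T (q ^ (m + 1)) e ∈ A) :
    cyclicSubmodule T e ⊓ A ≤ cyclicSubmodule T (aeval T (q ^ (m + 1)) e) := by
  rintro _ ⟨⟨p, rfl⟩, hp⟩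
  obtain ⟨r, rfl⟩ := pow_succ_dvd_of_aeval_apply_mem hq hA he he' hp
  exact ⟨r, by simp [mul_comm _ r]⟩

theorem exists_irreducible_not_injective_aeval [FiniteDimensional K V] [Nontrivial V]
    (T : Module.End K V) : ∃ q : K[X], Irreducible q ∧ ¬ Function.Injective (aeval T q) := by
  have hT : IsIntegral K T := Algebra.IsIntegral.isIntegral T
  obtain ⟨q, hq, r, hr⟩ :=
    WfDvdMonoid.exists_irreducible_factor (minpoly.not_isUnit K T) (minpoly.ne_zero hT)
  refine ⟨q, hq, fun hinj ↦ hq.not_isUnit ?_⟩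
  have hTr : aeval T r = 0 := by
    ext x
    apply hinj
    rw [← Module.End.mul_apply, ← map_mul, ← hr, minpoly.aeval]
    simp
  obtain ⟨s, hs⟩ := minpoly.dvd K T hTr
  have hr0 : r ≠ 0 := right_ne_zero_of_mul (hr ▸ minpoly.ne_zero hT)
  exact .of_mul_eq_one s (mul_left_cancel₀ hr0 (by rw [mul_one]; nth_rw 2 [hs]; rw [hr]; ring))

end CyclicField

section Form

variable {R M : Type*} [CommRing R] [AddCommGroup M] [Module R M] {B : BilinForm R M}
  {T : Module.End R M} {U W : Submodule R M} {e w : M}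

theorem isSelfAdjoint_pow (hT : B.IsSelfAdjoint T) (n : ℕ) :
    B.IsSelfAdjoint (T ^ n : Module.End R M) := by
  intro x y
  induction n generalizing x with
  | zero => simp
  | succ n ih => rw [pow_succ, Module.End.mul_apply, ih, hT, ← Module.End.mul_apply T, ← pow_succ',
      pow_succ]

theorem isSelfAdjoint_aeval (hT : B.IsSelfAdjoint T) (p : R[X]) :
    B.IsSelfAdjoint (aeval T p) := by
  intro x y
  simp [aeval_eq_sum_range, isSelfAdjoint_pow hT _ x y]

theorem apply_pow_apply_self (hB : B.IsAlt) (hT : B.IsSelfAdjoint T)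
    (hBT : ∀ x, B x (T x) = 0) (n : ℕ) (x : M) : B x ((T ^ n) x) = 0 := by
  obtain ⟨m, rfl | rfl⟩ := n.even_or_odd'
  · rw [two_mul, pow_add, Module.End.mul_apply, ← isSelfAdjoint_pow hT m]
    exact hB _
  · rw [two_mul, add_assoc, pow_add, Module.End.mul_apply, ← isSelfAdjoint_pow hT m, pow_succ',
      Module.End.mul_apply]
    exact hBT _

theorem apply_aeval_apply_self (hB : B.IsAlt) (hT : B.IsSelfAdjoint T)
    (hBT : ∀ x, B x (T x) = 0) (p : R[X]) (x : M) : B x (aeval T p x) = 0 := by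
  simp [aeval_eq_sum_range, apply_pow_apply_self hB hT hBT]

theorem orthogonal_mem_invtSubmodule (hT : B.IsSelfAdjoint T) (hU : U ∈ T.invtSubmodule) :
    B.orthogonal U ∈ T.invtSubmodule :=
  fun x hx a ha ↦ (hT a x).symm.trans (hx _ (hU ha))

theorem cyclicSubmodule_le_orthogonal_self (hB : B.IsAlt) (hT : B.IsSelfAdjoint T)
    (hBT : ∀ x, B x (T x) = 0) (e : M) :
    cyclicSubmodule T e ≤ B.orthogonal (cyclicSubmodule T e) := by
  rintro _ ⟨p, rfl⟩ _ ⟨r, rfl⟩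
  change B (aeval T r e) (aeval T p e) = 0
  rw [isSelfAdjoint_aeval hT, ← Module.End.mul_apply, ← map_mul]
  exact apply_aeval_apply_self hB hT hBT _ _

theorem span_singleton_le_orthogonal_self (hB : B.IsAlt) (y : M) :
    R ∙ y ≤ B.orthogonal (R ∙ y) := by
  rw [Submodule.span_singleton_le_iff_mem]
  intro x hx
  obtain ⟨c, rfl⟩ := Submodule.mem_span_singleton.mp hx
  simp [hB y]

theorem sup_le_orthogonal_sup (hB : B.IsRefl) (hU : U ≤ B.orthogonal U) (hW : W ≤ B.orthogonal W)
    (hUW : W ≤ B.orthogonal U) : U ⊔ W ≤ B.orthogonal (U ⊔ W) := by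
  have hWU : U ≤ B.orthogonal W := fun a ha c hc ↦ hB _ _ (hUW hc a ha)
  have horth {N : Submodule R M} (hUN : U ≤ B.orthogonal N) (hWN : W ≤ B.orthogonal N) :
      N ≤ B.orthogonal (U ⊔ W) := fun n hn x hx ↦ hB _ _ (sup_le hUN hWN hx n hn)
  exact sup_le (horth hU hUW) (horth hWU hW)

theorem cyclicSubmodule_sup_le_orthogonal (hB : B.IsAlt) (hT : B.IsSelfAdjoint T)
    (hBT : ∀ x, B x (T x) = 0) (hew : w ∈ B.orthogonal (cyclicSubmodule T e)) :
    cyclicSubmodule T e ⊔ cyclicSubmodule T w ≤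
      B.orthogonal (cyclicSubmodule T e ⊔ cyclicSubmodule T w) :=
  sup_le_orthogonal_sup hB.isRefl (cyclicSubmodule_le_orthogonal_self hB hT hBT e)
    (cyclicSubmodule_le_orthogonal_self hB hT hBT w)
    (cyclicSubmodule_le
      (orthogonal_mem_invtSubmodule hT (cyclicSubmodule_mem_invtSubmodule T e)) hew)

end Form

section DualBasis

variable {K V : Type*} [Field K] [AddCommGroup V] [Module K V] {B : BilinForm K V}
  {L M N U : Submodule K V} {y : V}

theorem disjoint_span_singleton_orthogonal {x : V} (hxy : B y x ≠ 0) :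
    Disjoint (K ∙ x) (B.orthogonal (K ∙ y)) := by
  refine Submodule.disjoint_def.mpr fun z hz hz' ↦ ?_
  obtain ⟨c, rfl⟩ := Submodule.mem_span_singleton.mp hz
  have hc := hz' y (Submodule.mem_span_singleton_self y)
  rw [map_smul, smul_eq_zero_iff_left hxy] at hc
  rw [hc, zero_smul]

variable [FiniteDimensional K V]

theorem exists_mem_orthogonal_apply_ne_zero (hB : B.IsRefl)
    (hB' : B.Nondegenerate) (hy : y ∉ U) : ∃ w ∈ B.orthogonal U, B y w ≠ 0 := by
  contrapose! hy
  rw [← LinearMap.BilinForm.orthogonal_orthogonal hB' hB U]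
  exact fun w hw ↦ hB _ _ (hy w hw)

theorem exists_isCompl_isotropic (hB : B.IsAlt) (hB' : B.Nondegenerate)
    (hL : B.orthogonal L = L) (hN : N ≤ B.orthogonal N) (hLN : Disjoint L N) :
    ∃ M, N ≤ M ∧ M ≤ B.orthogonal M ∧ IsCompl L M := by
  obtain ⟨M, hNM, hM⟩ := exists_maximal_ge_of_wellFoundedGT
    (fun M ↦ M ≤ B.orthogonal M ∧ Disjoint L M) N ⟨hN, hLN⟩
  have hML : B.orthogonal M ≤ L ⊔ M := by
    intro x hxM
    by_contra hx
    have hMx : M ⊔ K ∙ x ≤ B.orthogonal (M ⊔ K ∙ x) :=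
      sup_le_orthogonal_sup hB.isRefl hM.prop.1
        (span_singleton_le_orthogonal_self hB x) (by simpa using hxM)
    have hLMx : Disjoint L (M ⊔ K ∙ x) :=
      hM.prop.2.disjoint_sup_right_of_disjoint_sup_left
        (Submodule.disjoint_span_singleton_of_notMem hx)
    exact hx (Submodule.mem_sup_right (hM.le_of_ge ⟨hMx, hLMx⟩ le_sup_left
      (Submodule.mem_sup_right (Submodule.mem_span_singleton_self x))))
  have hbot : B.orthogonal (L ⊔ M) = ⊥ := by
    refine le_bot_iff.mp (le_trans (le_inf ?_ ?_) hM.prop.2.le_bot)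
    · exact (LinearMap.BilinForm.orthogonal_le le_sup_left).trans hL.le
    · exact (LinearMap.BilinForm.orthogonal_le hML).trans
        (LinearMap.BilinForm.orthogonal_orthogonal hB' hB.isRefl M).le
  refine ⟨M, hNM, hM.prop.1, hM.prop.2, codisjoint_iff.mpr ?_⟩
  rw [← LinearMap.BilinForm.orthogonal_orthogonal hB' hB.isRefl (L ⊔ M), hbot]
  simp

theorem isPerfPair_domRestrict₁₂ (hB : B.Nondegenerate) (hL : B.orthogonal L = L)
    (hLM : IsCompl L M) : (B.domRestrict₁₂ L M).IsPerfPair := by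
  refine .of_injective ?_ ?_ <;> refine (injective_iff_map_eq_zero _).mpr ?_
  · rintro ⟨l, hl⟩ hlM
    refine Subtype.ext (hB.1 l fun x ↦ ?_)
    obtain ⟨a, ha, m, hm, rfl⟩ :=
      Submodule.mem_sup.mp (hLM.sup_eq_top ▸ Submodule.mem_top : x ∈ L ⊔ M)
    have hla : B l a = 0 := hL.ge ha l hl
    have hlm : B l m = 0 := congr($hlM ⟨m, hm⟩)
    simp [hla, hlm]
  · rintro ⟨m, hm⟩ hmL
    have hmem : m ∈ B.orthogonal L := fun l hl ↦ congr($hmL ⟨l, hl⟩)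
    simpa using Submodule.disjoint_def.mp hLM.disjoint m (hL ▸ hmem) hm

theorem exists_dual_family (hB : B.Nondegenerate) (hL : B.orthogonal L = L)
    (hLM : IsCompl L M) {n : ℕ}
    (hn : Module.finrank K V = n + n) :
    ∃ e f : Fin n → V, (∀ i, e i ∈ L) ∧ (∀ j, f j ∈ M) ∧
      ∀ i j, B (e i) (f j) = if i = j then 1 else 0 := by
  have := isPerfPair_domRestrict₁₂ hB hL hLM
  let p := B.domRestrict₁₂ L M
  have hfin : Module.finrank K L = n := by
    have h := Submodule.finrank_add_eq_of_isCompl hLM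
    rw [← Module.finrank_of_isPerfPair p] at h
    lia
  let e := Module.finBasisOfFinrankEq K L hfin
  refine ⟨fun i ↦ e i, fun j ↦ p.flip.toPerfPair.symm (e.coord j),
    fun i ↦ (e i).2, fun _ ↦ Subtype.prop _, fun i j ↦ ?_⟩
  calc B (e i) (p.flip.toPerfPair.symm (e.coord j))
      = e.coord j (e i) := p.apply_toPerfPair_flip _ _
    _ = if i = j then 1 else 0 := by simp [Finsupp.single_apply]

end DualBasis

section Commute

variable {R M : Type*} [CommRing R] [AddCommGroup M] [Module R M] {f T : Module.End R M}

theorem map_mem_invtSubmodule_of_commute (h : Commute f T) {U : Submodule R M}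
    (hU : U ∈ T.invtSubmodule) :
    U.map f ∈ T.invtSubmodule := by
  rintro _ ⟨x, hx, rfl⟩
  exact ⟨T x, hU hx, congr($h x)⟩

theorem ker_mem_invtSubmodule_of_commute (h : Commute f T) : LinearMap.ker f ∈ T.invtSubmodule := by
  intro x hx
  have hfT : f (T x) = T (f x) := congr($h x)
  simp_all

theorem commute_aeval (h : Commute f T) (p : R[X]) : Commute f (aeval T p) := by
  rw [aeval_eq_sum_range]
  exact Commute.sum_right _ _ _ fun i _ ↦ (h.pow_right i).smul_right _

end Commute

section Isometry

variable {R M : Type*} [CommRing R] [AddCommGroup M] [Module R M]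

/-- The operator `g + g⁻¹`. For an isometry `g` it is self-adjoint and commutes with `g`, so that
its polynomials are a supply of self-adjoint operators. -/
def addSymm (g : M ≃ₗ[R] M) : Module.End R M :=
  g.toLinearMap + g.symm.toLinearMap

/-- The operator `g - 1` measuring how far `g` moves each vector. -/
def displacement (g : M ≃ₗ[R] M) : Module.End R M :=
  g.toLinearMap - 1

theorem addSymm_apply (g : M ≃ₗ[R] M) (x : M) : addSymm g x = g x + g.symm x :=
  rfl

theorem displacement_apply (g : M ≃ₗ[R] M) (x : M) : displacement g x = g x - x :=
  rfl

theorem commute_displacement_addSymm (g : M ≃ₗ[R] M) : Commute (displacement g) (addSymm g) := by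
  ext x
  simp only [Module.End.mul_apply, displacement_apply, addSymm_apply, map_add, map_sub,
    LinearEquiv.apply_symm_apply, LinearEquiv.symm_apply_apply]
  abel

theorem commute_addSymm (g : M ≃ₗ[R] M) : Commute (addSymm g) g.toLinearMap := by
  ext x
  simp [addSymm_apply]

theorem mem_invtSubmodule_of_mem_invtSubmodule_displacement {g : M ≃ₗ[R] M} {U : Submodule R M}
    (hU : U ∈ (displacement g).invtSubmodule) : U ∈ Module.End.invtSubmodule g.toLinearMap :=
  fun x hx ↦ by simpa [displacement_apply] using U.add_mem (hU hx) hx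

theorem displacement_displacement [CharP R 2] (g : M ≃ₗ[R] M) (x : M) :
    displacement g (displacement g x) = g (addSymm g x) := by
  have hx : g x + g x = 0 := by rw [← two_smul R, CharTwo.two_eq_zero, zero_smul]
  calc displacement g (displacement g x) = g (g x) + x - (g x + g x) := by
        simp only [displacement_apply, map_sub]
        abel
    _ = g (addSymm g x) := by simp [hx, addSymm_apply]

variable {B : BilinForm R M} {g : M ≃ₗ[R] M}

theorem apply_left_eq_apply_symm_right (hg : B.IsOrthogonal g) (x y : M) :
    B (g x) y = B x (g.symm y) := by
  simpa using hg x (g.symm y)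

theorem isSelfAdjoint_addSymm (hg : B.IsOrthogonal g) : B.IsSelfAdjoint (addSymm g) := by
  intro x y
  have hsymm : B (g.symm x) y = B x (g y) := by simpa using (hg (g.symm x) y).symm
  simp [addSymm_apply, apply_left_eq_apply_symm_right hg x y, hsymm, add_comm]

theorem apply_addSymm_self (hB : B.IsAlt) (hg : B.IsOrthogonal g) (x : M) :
    B x (addSymm g x) = 0 := by
  rw [addSymm_apply, map_add, ← apply_left_eq_apply_symm_right hg, ← hB.neg_eq, neg_add_cancel]

theorem apply_displacement_symm (hg : B.IsOrthogonal g) (x y : M) :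
    B x (displacement g (g.symm y)) = -B (displacement g x) y := by
  simp [displacement_apply, apply_left_eq_apply_symm_right hg]

variable [CharP R 2]

theorem apply_displacement_displacement (hg : B.IsOrthogonal g) (x y : M) :
    B (displacement g x) (displacement g y) = B x (addSymm g y) := by
  simp only [displacement_apply, addSymm_apply, map_sub, map_add, LinearMap.sub_apply, hg x y,
    apply_left_eq_apply_symm_right hg x y, CharTwo.sub_eq_add]
  linear_combination B x y * CharTwo.two_eq_zero (R := R)

theorem apply_displacement_comm (hB : B.IsAlt) (hg : B.IsOrthogonal g) (x y : M) :
    B (displacement g x) y = B (displacement g y) x + B x (addSymm g y) := by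
  simp only [displacement_apply, addSymm_apply, map_sub, map_add, LinearMap.sub_apply,
    apply_left_eq_apply_symm_right hg x y]
  linear_combination hB.neg_eq x (g y) - hB.neg_eq x y - B x y * CharTwo.two_eq_zero (R := R)

end Isometry

section Criterion

variable {K V : Type*} [Field K] [AddCommGroup V] [Module K V]

/-- A subspace `L` adapted to an isometry `g` is a Lagrangian stable under `g + g⁻¹` that meets
`(g - 1) L` trivially. In a basis `e` of `L` and a dual basis `f` of a Lagrangian complement
containing `(g - 1) L`, the pairings `B (g eᵢ) fⱼ` form the identity matrix. -/
structure IsAdaptedLagrangian (B : BilinForm K V) (g : V ≃ₗ[K] V) (L : Submodule K V) : Prop where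
  orthogonal_eq : B.orthogonal L = L
  mem_invtSubmodule : L ∈ (addSymm g).invtSubmodule
  disjoint_map_displacement : Disjoint L (L.map (displacement g))

/-- The space is not an orthogonal direct sum of two nonzero `g`-stable subspaces. -/
def IsOrthogonallyIndecomposable (B : BilinForm K V) (g : V ≃ₗ[K] V) : Prop :=
  ∀ U ∈ Module.End.invtSubmodule g.toLinearMap, Disjoint U (B.orthogonal U) → U = ⊥ ∨ U = ⊤

variable [CharP K 2] {B : BilinForm K V} {g : V ≃ₗ[K] V} {L W : Submodule K V}

theorem displacement_eq_zero_of_mem_orthogonal (hB : B.IsAlt) (hg : B.IsOrthogonal g)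
    (hL : L ≤ B.orthogonal L) (hLg : L ∈ (addSymm g).invtSubmodule)
    (hker : L ⊓ B.orthogonal (L.map (displacement g)) ≤ LinearMap.ker (displacement g))
    {b : V} (hb : b ∈ L) (hDb : displacement g b ∈ B.orthogonal L) : displacement g b = 0 := by
  refine hker ⟨hb, ?_⟩
  rintro _ ⟨a, ha, rfl⟩
  rw [apply_displacement_comm hB hg, hL (hLg hb) a ha, add_zero]
  exact hB.isRefl _ _ (hDb a ha)

theorem mem_of_mem_orthogonal_of_mem_sup (hB : B.IsAlt) (hg : B.IsOrthogonal g)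
    (hL : L ≤ B.orthogonal L) (hLg : L ∈ (addSymm g).invtSubmodule)
    (hker : L ⊓ B.orthogonal (L.map (displacement g)) ≤ LinearMap.ker (displacement g))
    (hW : Disjoint W (B.orthogonal (L ⊓ B.orthogonal (L.map (displacement g))))) {x : V}
    (hx : x ∈ B.orthogonal L) (hx' : x ∈ L ⊔ L.map (displacement g) ⊔ W) : x ∈ L := by
  obtain ⟨y, hy, c, hc, rfl⟩ := Submodule.mem_sup.mp hx'
  obtain ⟨l, hl, _, ⟨b, hb, rfl⟩, rfl⟩ := Submodule.mem_sup.mp hy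
  have hc0 : c = 0 := by
    refine Submodule.disjoint_def.mp hW c hc fun r ⟨hrL, hrD⟩ ↦ ?_
    have hr : B r (displacement g b) = 0 := hB.isRefl _ _ (hrD _ ⟨b, hb, rfl⟩)
    simpa [hL hl r hrL, hr] using hx r hrL
  have hDb : displacement g b ∈ B.orthogonal L := by
    have h := sub_mem hx (hL hl)
    rwa [hc0, add_zero, add_sub_cancel_left] at h
  have hb0 := displacement_eq_zero_of_mem_orthogonal hB hg hL hLg hker hb hDb
  simpa [hc0, hb0] using hl

theorem sup_map_displacement_sup_mem_invtSubmodule (hLg : L ∈ (addSymm g).invtSubmodule)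
    (hWL : W.map (displacement g) ≤ L) :
    L ⊔ L.map (displacement g) ⊔ W ∈ Module.End.invtSubmodule g.toLinearMap := by
  apply mem_invtSubmodule_of_mem_invtSubmodule_displacement
  rw [Module.End.mem_invtSubmodule_iff_map_le, Submodule.map_sup, Submodule.map_sup]
  refine sup_le (sup_le (le_sup_right.trans le_sup_left) ?_)
    (hWL.trans (le_sup_left.trans le_sup_left))
  rintro _ ⟨_, ⟨x, hx, rfl⟩, rfl⟩
  have hgS : g (addSymm g x) = addSymm g x + displacement g (addSymm g x) := by
    rw [displacement_apply, add_sub_cancel]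
  rw [displacement_displacement, hgS]
  exact Submodule.mem_sup_left (add_mem (Submodule.mem_sup_left (hLg hx))
    (Submodule.mem_sup_right ⟨_, hLg hx, rfl⟩))

-- The radical of `L + (g - 1) L` is `L ∩ ((g - 1) L)^⊥`; the subspace `W` is in perfect pairing
-- with it, so that `L + (g - 1) L + W` becomes nondegenerate and hence the whole space.
theorem IsOrthogonallyIndecomposable.isAdaptedLagrangian (hind : IsOrthogonallyIndecomposable B g)
    (hB : B.IsAlt) (hg : B.IsOrthogonal g) (hL0 : L ≠ ⊥) (hL : L ≤ B.orthogonal L)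
    (hLg : L ∈ (addSymm g).invtSubmodule)
    (hker : L ⊓ B.orthogonal (L.map (displacement g)) ≤ LinearMap.ker (displacement g))
    (hWL : W.map (displacement g) ≤ L)
    (hW : Disjoint W (B.orthogonal (L ⊓ B.orthogonal (L.map (displacement g)))))
    (hW' : Disjoint (L ⊓ B.orthogonal (L.map (displacement g))) (B.orthogonal W)) :
    IsAdaptedLagrangian B g L := by
  have hmem {x : V} (hx : x ∈ B.orthogonal L) (hx' : x ∈ L ⊔ L.map (displacement g) ⊔ W) :=
    mem_of_mem_orthogonal_of_mem_sup hB hg hL hLg hker hW hx hx'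
  have hdisj : Disjoint (L ⊔ L.map (displacement g) ⊔ W)
      (B.orthogonal (L ⊔ L.map (displacement g) ⊔ W)) := by
    refine Submodule.disjoint_def.mpr fun x hx hx' ↦ ?_
    have hxL := LinearMap.BilinForm.orthogonal_le (le_sup_left.trans le_sup_left) hx'
    have hxD := LinearMap.BilinForm.orthogonal_le (le_sup_right.trans le_sup_left) hx'
    have hxW := LinearMap.BilinForm.orthogonal_le le_sup_right hx'
    exact Submodule.disjoint_def.mp hW' x ⟨hmem hxL hx, hxD⟩ hxW
  have htop := (hind _ (sup_map_displacement_sup_mem_invtSubmodule hLg hWL) hdisj).resolve_left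
    fun h ↦ hL0 (le_bot_iff.mp (h ▸ le_sup_left.trans le_sup_left))
  refine ⟨le_antisymm (fun x hx ↦ hmem hx (htop ▸ Submodule.mem_top)) hL, hLg, ?_⟩
  refine Submodule.disjoint_def.mpr ?_
  rintro _ hbL ⟨b, hb, rfl⟩
  exact displacement_eq_zero_of_mem_orthogonal hB hg hL hLg hker hb (hL hbL)

end Criterion

section Construction

variable {K V : Type*} [Field K] [AddCommGroup V] [Module K V] {B : BilinForm K V}
  {g : V ≃ₗ[K] V} {e w : V}

theorem displacement_addSymm_pow (g : V ≃ₗ[K] V) (n : ℕ) (x : V) :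
    displacement g ((addSymm g ^ n) x) = (addSymm g ^ n) (displacement g x) :=
  congr($((commute_displacement_addSymm g).pow_right n) x)

theorem apply_displacement_addSymm_pow (hg : B.IsOrthogonal g) (n : ℕ) (x y : V) :
    B (displacement g x) ((addSymm g ^ n) y) = B (displacement g ((addSymm g ^ n) x)) y := by
  rw [← isSelfAdjoint_pow (isSelfAdjoint_addSymm hg), displacement_addSymm_pow]

theorem orthogonal_map_displacement_mem_invtSubmodule (hg : B.IsOrthogonal g) {L : Submodule K V}
    (hL : L ∈ (addSymm g).invtSubmodule) :
    B.orthogonal (L.map (displacement g)) ∈ (addSymm g).invtSubmodule :=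
  orthogonal_mem_invtSubmodule (isSelfAdjoint_addSymm hg)
    (map_mem_invtSubmodule_of_commute (commute_displacement_addSymm g) hL)

variable [CharP K 2]

theorem IsOrthogonallyIndecomposable.isAdaptedLagrangian_of_disjoint
    (hind : IsOrthogonallyIndecomposable B g) (hB : B.IsAlt) (hg : B.IsOrthogonal g)
    {L : Submodule K V} (hL0 : L ≠ ⊥) (hL : L ≤ B.orthogonal L)
    (hLg : L ∈ (addSymm g).invtSubmodule)
    (hdisj : Disjoint L (B.orthogonal (L.map (displacement g)))) : IsAdaptedLagrangian B g L :=
  hind.isAdaptedLagrangian (W := ⊥) hB hg hL0 hL hLg (by simp [hdisj.eq_bot]) (by simp) (by simp)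
    (by simp [hdisj.eq_bot])

theorem IsOrthogonallyIndecomposable.isAdaptedLagrangian_cyclicSubmodule
    (hind : IsOrthogonallyIndecomposable B g) (hB : B.IsAlt) (hg : B.IsOrthogonal g) {q : K[X]}
    (hq : Irreducible q) {k : ℕ} (hqk : aeval (addSymm g) (q ^ (k + 1)) = 0)
    (he : B (displacement g e) (aeval (addSymm g) (q ^ k) e) ≠ 0) :
    IsAdaptedLagrangian B g (cyclicSubmodule (addSymm g) e) := by
  have heL := self_mem_cyclicSubmodule (addSymm g) e
  have hLg := cyclicSubmodule_mem_invtSubmodule (addSymm g) e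
  refine hind.isAdaptedLagrangian_of_disjoint hB hg ?_ (cyclicSubmodule_le_orthogonal_self hB
    (isSelfAdjoint_addSymm hg) (apply_addSymm_self hB hg) e) hLg (disjoint_iff_inf_le.mpr ?_)
  · intro hL
    rw [hL, Submodule.mem_bot] at heL
    simp [heL] at he
  · grw [cyclicSubmodule_inf_le hq (orthogonal_map_displacement_mem_invtSubmodule hg hLg)
      (fun h ↦ he (h _ ⟨e, heL, rfl⟩)) (by simp [hqk])]
    simp [hqk, cyclicSubmodule_zero]

theorem displacement_addSymm_pow_notMem_cyclicSubmodule {k : ℕ} (hk : addSymm g ^ (k + 1) = 0)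
    (he : displacement g ((addSymm g ^ k) e) ≠ 0) :
    displacement g ((addSymm g ^ k) e) ∉ cyclicSubmodule (addSymm g) e := by
  intro hmem
  have hker : displacement g ((addSymm g ^ k) e) ∈ LinearMap.ker (displacement g) := by
    rw [LinearMap.mem_ker, displacement_displacement, ← Module.End.mul_apply, ← pow_succ', hk]
    simp
  have h := cyclicSubmodule_inf_le irreducible_X (m := k) (e := e)
    (ker_mem_invtSubmodule_of_commute (commute_displacement_addSymm g)) (by simpa using he)
    (by simp [hk])
    ⟨hmem, hker⟩
  rw [map_pow, aeval_X, hk, LinearMap.zero_apply, cyclicSubmodule_zero] at h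
  exact he h

theorem eq_zero_of_smul_add_smul_mem_orthogonal (hB : B.IsAlt) (hg : B.IsOrthogonal g) {k : ℕ}
    (halt : ∀ x, B (displacement g x) ((addSymm g ^ k) x) = 0) {L : Submodule K V} (heL : e ∈ L)
    (hwL : w ∈ L) (hw : w ∈ B.orthogonal (cyclicSubmodule (addSymm g) e))
    (hew : B (displacement g ((addSymm g ^ k) e)) w ≠ 0) {a b : K}
    (hab : a • (addSymm g ^ k) e + b • (addSymm g ^ k) w ∈ B.orthogonal (L.map (displacement g))) :
    a = 0 ∧ b = 0 := by
  have hew' : B (displacement g w) ((addSymm g ^ k) e) =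
      B (displacement g ((addSymm g ^ k) e)) w := by
    have hSw : B ((addSymm g ^ k) e) (addSymm g w) = 0 :=
      orthogonal_mem_invtSubmodule (isSelfAdjoint_addSymm hg)
        (cyclicSubmodule_mem_invtSubmodule (addSymm g) e) hw _ ⟨X ^ k, by simp⟩
    rw [apply_displacement_comm hB hg _ w, hSw, add_zero]
  have hDe := hab _ ⟨e, heL, rfl⟩
  have hDw := hab _ ⟨w, hwL, rfl⟩
  simp only [map_add, map_smul, halt, smul_zero, zero_add, add_zero, hew',
    apply_displacement_addSymm_pow hg k e w, smul_eq_zero, hew, or_false] at hDe hDw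
  exact ⟨hDw, hDe⟩

theorem IsOrthogonallyIndecomposable.isAdaptedLagrangian_cyclicSubmodule_sup
    (hind : IsOrthogonallyIndecomposable B g) (hB : B.IsAlt) (hg : B.IsOrthogonal g) {k : ℕ}
    (hk : addSymm g ^ (k + 1) = 0) (halt : ∀ x, B (displacement g x) ((addSymm g ^ k) x) = 0)
    (hw : w ∈ B.orthogonal (cyclicSubmodule (addSymm g) e))
    (hew : B (displacement g ((addSymm g ^ k) e)) w ≠ 0) :
    IsAdaptedLagrangian B g (cyclicSubmodule (addSymm g) e ⊔ cyclicSubmodule (addSymm g) w) := by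
  have heL := self_mem_cyclicSubmodule (addSymm g) e
  have hLg := Module.End.invtSubmodule.sup_mem (cyclicSubmodule_mem_invtSubmodule (addSymm g) e)
    (cyclicSubmodule_mem_invtSubmodule (addSymm g) w)
  refine hind.isAdaptedLagrangian_of_disjoint hB hg ?_ (cyclicSubmodule_sup_le_orthogonal hB
    (isSelfAdjoint_addSymm hg) (apply_addSymm_self hB hg) hw) hLg (disjoint_iff_inf_le.mpr ?_)
  · intro hL
    rw [(sup_eq_bot_iff.mp hL).1, Submodule.mem_bot] at heL
    simp [heL] at hew
  grw [cyclicSubmodule_sup_inf_le (orthogonal_map_displacement_mem_invtSubmodule hg hLg)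
    (by simp [hk]) (by simp [hk]) fun a b ↦ eq_zero_of_smul_add_smul_mem_orthogonal hB hg halt
      (Submodule.mem_sup_left heL) (Submodule.mem_sup_right (self_mem_cyclicSubmodule _ w)) hw hew]
  simp [hk, cyclicSubmodule_zero]

theorem addSymm_pow_notMem_map_displacement {k : ℕ} (hk : addSymm g ^ (k + 1) = 0)
    (hD : ∀ x, displacement g ((addSymm g ^ k) x) = 0) (he : (addSymm g ^ k) e ≠ 0) :
    (addSymm g ^ k) e ∉ (cyclicSubmodule (addSymm g) e).map (displacement g) := by
  rintro ⟨x, hx, hxe⟩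
  obtain _ | m := k
  · exact he (hxe.symm.trans (hD x))
  have hSx : addSymm g x = 0 := by
    rw [← map_eq_zero_iff g g.injective, ← displacement_displacement, hxe, hD]
  have hx' := cyclicSubmodule_inf_le irreducible_X (m := m) (e := e)
    (ker_mem_invtSubmodule_of_commute (Commute.refl (addSymm g)))
    (by simpa [← Module.End.mul_apply, ← pow_succ'] using he)
    (by simp [← Module.End.mul_apply, ← pow_succ', hk]) ⟨hx, hSx⟩
  have hxD := cyclicSubmodule_le (ker_mem_invtSubmodule_of_commute (commute_displacement_addSymm g))
    (by simpa using hD e) hx'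
  exact he (hxe.symm.trans hxD)

theorem apply_displacement_addSymm_pow_displacement (hg : B.IsOrthogonal g) (m : ℕ) (x y : V) :
    B (displacement g x) ((addSymm g ^ m) (displacement g y)) = B ((addSymm g ^ (m + 1)) x) y := by
  rw [← displacement_addSymm_pow, apply_displacement_displacement hg, ← Module.End.mul_apply,
    ← pow_succ', isSelfAdjoint_pow (isSelfAdjoint_addSymm hg)]

theorem eq_zero_of_smul_add_smul_displacement_mem_orthogonal (hB : B.IsAlt)
    (hg : B.IsOrthogonal g) {m : ℕ} (hD : ∀ x, displacement g ((addSymm g ^ (m + 1)) x) = 0)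
    {L : Submodule K V} (heL : e ∈ L) (hDwL : displacement g w ∈ L)
    (hew : B ((addSymm g ^ (m + 1)) e) w ≠ 0) {a b : K}
    (hab : a • (addSymm g ^ m) e + b • (addSymm g ^ m) (displacement g w) ∈
      B.orthogonal (L.map (displacement g))) : a = 0 ∧ b = 0 := by
  have hDDw : B (displacement g (displacement g w)) ((addSymm g ^ m) (displacement g w)) = 0 := by
    rw [apply_displacement_addSymm_pow_displacement hg, ← displacement_addSymm_pow, hD, map_zero,
      LinearMap.zero_apply]
  have hDDe : B (displacement g (displacement g w)) ((addSymm g ^ m) e) =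
      B ((addSymm g ^ (m + 1)) e) w := by
    have hDw : B (displacement g w) (addSymm g ((addSymm g ^ m) e)) = 0 := by
      rw [← Module.End.mul_apply, ← pow_succ', apply_displacement_addSymm_pow hg, hD, map_zero,
        LinearMap.zero_apply]
    rw [apply_displacement_comm hB hg, hDw, add_zero, apply_displacement_displacement hg,
      ← isSelfAdjoint_addSymm hg, ← Module.End.mul_apply, ← pow_succ']
  have ha := hab _ ⟨_, hDwL, rfl⟩
  rw [map_add, map_smul, map_smul, hDDw, hDDe, smul_zero, add_zero, smul_eq_zero_iff_left hew] at ha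
  have hb := hab _ ⟨_, heL, rfl⟩
  rw [ha, zero_smul, zero_add, map_smul, apply_displacement_addSymm_pow_displacement hg,
    smul_eq_zero_iff_left hew] at hb
  exact ⟨ha, hb⟩

theorem cyclicSubmodule_sup_displacement_inf_le (hB : B.IsAlt) (hg : B.IsOrthogonal g) {k : ℕ}
    (hD : ∀ x, displacement g ((addSymm g ^ k) x) = 0) (hew : B ((addSymm g ^ k) e) w ≠ 0) :
    (cyclicSubmodule (addSymm g) e ⊔ cyclicSubmodule (addSymm g) (displacement g w)) ⊓
      B.orthogonal ((cyclicSubmodule (addSymm g) e ⊔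
        cyclicSubmodule (addSymm g) (displacement g w)).map (displacement g)) ≤
      cyclicSubmodule (addSymm g) ((addSymm g ^ k) e) := by
  obtain _ | m := k
  · have hDw : displacement g w = 0 := hD w
    grw [inf_le_left]
    simp [hDw, cyclicSubmodule_zero]
  have hLg := Module.End.invtSubmodule.sup_mem (cyclicSubmodule_mem_invtSubmodule (addSymm g) e)
    (cyclicSubmodule_mem_invtSubmodule (addSymm g) (displacement g w))
  have hDw : (addSymm g ^ (m + 1)) (displacement g w) = 0 := by
    rw [← displacement_addSymm_pow, hD]
  have hNe : (addSymm g ^ (m + 1)) e ∈ B.orthogonal ((cyclicSubmodule (addSymm g) e ⊔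
      cyclicSubmodule (addSymm g) (displacement g w)).map (displacement g)) := by
    rintro _ ⟨x, -, rfl⟩
    simp [apply_displacement_addSymm_pow hg, hD]
  grw [cyclicSubmodule_sup_inf_le (orthogonal_map_displacement_mem_invtSubmodule hg hLg)
    hNe (by simp [hDw]) fun a b ↦ eq_zero_of_smul_add_smul_displacement_mem_orthogonal hB hg hD
      (Submodule.mem_sup_left (self_mem_cyclicSubmodule _ e))
      (Submodule.mem_sup_right (self_mem_cyclicSubmodule _ _)) hew]
  simp [hDw, cyclicSubmodule_zero]

theorem IsOrthogonallyIndecomposable.isAdaptedLagrangian_cyclicSubmodule_sup_displacement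
    (hind : IsOrthogonallyIndecomposable B g) (hB : B.IsAlt) (hg : B.IsOrthogonal g) {k : ℕ}
    (hk : addSymm g ^ (k + 1) = 0) (hD : ∀ x, displacement g ((addSymm g ^ k) x) = 0)
    (hw : displacement g w ∈ B.orthogonal (cyclicSubmodule (addSymm g) e))
    (hew : B ((addSymm g ^ k) e) w ≠ 0) :
    IsAdaptedLagrangian B g
      (cyclicSubmodule (addSymm g) e ⊔ cyclicSubmodule (addSymm g) (displacement g w)) := by
  have heL := self_mem_cyclicSubmodule (addSymm g) e
  have hLg := Module.End.invtSubmodule.sup_mem (cyclicSubmodule_mem_invtSubmodule (addSymm g) e)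
    (cyclicSubmodule_mem_invtSubmodule (addSymm g) (displacement g w))
  have hspan : (cyclicSubmodule (addSymm g) e ⊔ cyclicSubmodule (addSymm g) (displacement g w)) ⊓
      B.orthogonal ((cyclicSubmodule (addSymm g) e ⊔
        cyclicSubmodule (addSymm g) (displacement g w)).map (displacement g)) =
      K ∙ (addSymm g ^ k) e := by
    refine le_antisymm ((cyclicSubmodule_sup_displacement_inf_le hB hg hD hew).trans
      (cyclicSubmodule_le_span_singleton ?_)) ((Submodule.span_singleton_le_iff_mem _ _).mpr
      ⟨Submodule.mem_sup_left ⟨X ^ k, by simp⟩, ?_⟩)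
    · rw [← Module.End.mul_apply, ← pow_succ', hk, LinearMap.zero_apply]
    · rintro _ ⟨x, -, rfl⟩
      simp [apply_displacement_addSymm_pow hg, hD]
  refine hind.isAdaptedLagrangian (W := K ∙ w) hB hg ?_ (cyclicSubmodule_sup_le_orthogonal hB
    (isSelfAdjoint_addSymm hg) (apply_addSymm_self hB hg) hw) hLg ?_ ?_ ?_ ?_
  · intro hL
    rw [(sup_eq_bot_iff.mp hL).1, Submodule.mem_bot] at heL
    simp [heL] at hew
  · rw [hspan, Submodule.span_singleton_le_iff_mem]
    exact hD e
  · rw [Submodule.map_span_le]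
    simpa using Submodule.mem_sup_right (self_mem_cyclicSubmodule (addSymm g) (displacement g w))
  · exact hspan ▸ disjoint_span_singleton_orthogonal hew
  · exact hspan ▸ disjoint_span_singleton_orthogonal fun h ↦ hew (hB.isRefl _ _ h)

theorem IsOrthogonallyIndecomposable.exists_isAdaptedLagrangian_of_pow_succ_eq_zero
    [FiniteDimensional K V] (hind : IsOrthogonallyIndecomposable B g) (hB : B.IsAlt)
    (hB' : B.Nondegenerate) (hg : B.IsOrthogonal g) {k : ℕ}
    (hk : addSymm g ^ (k + 1) = 0) (hk' : addSymm g ^ k ≠ 0) :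
    ∃ L, IsAdaptedLagrangian B g L := by
  by_cases hne : ∃ e, B (displacement g e) ((addSymm g ^ k) e) ≠ 0
  · obtain ⟨e, he⟩ := hne
    exact ⟨_, hind.isAdaptedLagrangian_cyclicSubmodule hB hg irreducible_X (k := k)
      (by simpa using hk) (by simpa using he)⟩
  push Not at hne
  by_cases hD : ∃ e, displacement g ((addSymm g ^ k) e) ≠ 0
  · obtain ⟨e, he⟩ := hD
    obtain ⟨w, hw, hew⟩ := exists_mem_orthogonal_apply_ne_zero hB.isRefl hB'
      (displacement_addSymm_pow_notMem_cyclicSubmodule hk he)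
    exact ⟨_, hind.isAdaptedLagrangian_cyclicSubmodule_sup hB hg hk hne hw hew⟩
  push Not at hD
  obtain ⟨e, he⟩ := DFunLike.ne_iff.mp hk'
  obtain ⟨w, hw, hew⟩ := exists_mem_orthogonal_apply_ne_zero hB.isRefl hB'
    (addSymm_pow_notMem_map_displacement hk hD he)
  refine ⟨_, hind.isAdaptedLagrangian_cyclicSubmodule_sup_displacement hB hg hk hD (w := g.symm w)
    (e := e) (fun x hx ↦ ?_) ?_⟩
  · rw [apply_displacement_symm hg, hw _ ⟨x, hx, rfl⟩, neg_zero]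
  · have hge : g ((addSymm g ^ k) e) = (addSymm g ^ k) e := sub_eq_zero.mp (hD e)
    rwa [← apply_left_eq_apply_symm_right hg, hge]

end Construction

section Indecomposable

theorem exists_pow_succ_eq_zero_and_pow_ne_zero {R : Type*} [MonoidWithZero R] [Nontrivial R]
    {a : R} (ha : IsNilpotent a) : ∃ k, a ^ (k + 1) = 0 ∧ a ^ k ≠ 0 :=
  ⟨_, nilpotencyClass_eq_succ_iff.mp
    (Nat.succ_pred_eq_of_pos (pos_nilpotencyClass_iff.mpr ha)).symm⟩

variable {K V : Type*} [Field K] [AddCommGroup V] [Module K V] {B : BilinForm K V}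
  {g : V ≃ₗ[K] V}

theorem IsOrthogonallyIndecomposable.isNilpotent_or_injective [FiniteDimensional K V]
    (hind : IsOrthogonallyIndecomposable B g) (hB' : B.Nondegenerate) {T : Module.End K V}
    (hT : B.IsSelfAdjoint T) (hgT : Commute T g.toLinearMap) :
    IsNilpotent T ∨ Function.Injective T := by
  obtain ⟨n, hn, hn1⟩ := (T.eventually_isCompl_ker_pow_range_pow.and
    (Filter.eventually_ge_atTop 1)).exists
  have hdisj : Disjoint (LinearMap.ker (T ^ n)) (B.orthogonal (LinearMap.ker (T ^ n))) := by
    refine Submodule.disjoint_def.mpr fun x hx hx' ↦ hB'.2 x fun y ↦ ?_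
    obtain ⟨u, hu, _, ⟨v, rfl⟩, rfl⟩ :=
      Submodule.mem_sup.mp (hn.sup_eq_top ▸ Submodule.mem_top : y ∈ _)
    rw [map_add, LinearMap.add_apply, hx' u hu, isSelfAdjoint_pow hT, LinearMap.mem_ker.mp hx,
      map_zero, add_zero]
  refine (hind _ (ker_mem_invtSubmodule_of_commute (hgT.pow_left n)) hdisj).symm.imp
    (fun htop ↦ ?_) fun hbot ↦ ?_
  · exact ⟨n, LinearMap.ker_eq_top.mp htop⟩
  · refine LinearMap.ker_eq_bot.mp (le_bot_iff.mp (hbot ▸ fun x hx ↦ ?_))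
    rw [LinearMap.mem_ker, ← Nat.sub_add_cancel hn1, pow_succ, Module.End.mul_apply,
      LinearMap.mem_ker.mp hx, map_zero]

variable [CharP K 2]

theorem addSymm_aeval_apply_eq_zero (hB : B.IsAlt) (hB' : B.Nondegenerate) (hg : B.IsOrthogonal g)
    {p : K[X]} (hp : ∀ x, B (displacement g x) (aeval (addSymm g) p x) = 0) (x : V) :
    addSymm g (aeval (addSymm g) p x) = 0 := by
  refine hB'.1 _ fun y ↦ ?_
  have hpolar : B (displacement g x) (aeval (addSymm g) p y) +
      B (displacement g y) (aeval (addSymm g) p x) = 0 := by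
    simpa [hp] using hp (x + y)
  have hcomm : displacement g (aeval (addSymm g) p x) = aeval (addSymm g) p (displacement g x) :=
    congr($(commute_aeval (commute_displacement_addSymm g) p) x)
  rw [apply_displacement_comm hB hg y, hcomm, isSelfAdjoint_aeval (isSelfAdjoint_addSymm hg),
    ← add_assoc, CharTwo.add_self_eq_zero, zero_add] at hpolar
  exact hB.isRefl _ _ hpolar

theorem IsOrthogonallyIndecomposable.exists_isAdaptedLagrangian [FiniteDimensional K V]
    [Nontrivial V] (hind : IsOrthogonallyIndecomposable B g) (hB : B.IsAlt)
    (hB' : B.Nondegenerate) (hg : B.IsOrthogonal g) : ∃ L, IsAdaptedLagrangian B g L := by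
  obtain hnil | hinj := hind.isNilpotent_or_injective hB' (isSelfAdjoint_addSymm hg)
    (commute_addSymm g)
  · obtain ⟨k, hk, hk'⟩ := exists_pow_succ_eq_zero_and_pow_ne_zero hnil
    exact hind.exists_isAdaptedLagrangian_of_pow_succ_eq_zero hB hB' hg hk hk'
  obtain ⟨q, hq, hq'⟩ := exists_irreducible_not_injective_aeval (addSymm g)
  have hnil : IsNilpotent (aeval (addSymm g) q) :=
    (hind.isNilpotent_or_injective hB' (isSelfAdjoint_aeval (isSelfAdjoint_addSymm hg) q)
      (commute_aeval (commute_addSymm g).symm q).symm).resolve_right hq'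
  obtain ⟨k, hk, hk'⟩ := exists_pow_succ_eq_zero_and_pow_ne_zero hnil
  rw [← map_pow] at hk hk'
  obtain ⟨e, he⟩ : ∃ e, B (displacement g e) (aeval (addSymm g) (q ^ k) e) ≠ 0 := by
    by_contra! halt
    exact hk' (LinearMap.ext fun x ↦ hinj
      (by simpa using addSymm_aeval_apply_eq_zero hB hB' hg halt x))
  exact ⟨_, hind.isAdaptedLagrangian_cyclicSubmodule hB hg hq hk he⟩

end Indecomposable

section DirectSum

variable {K V : Type*} [Field K] [AddCommGroup V] [Module K V] {B : BilinForm K V}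
  {g : V ≃ₗ[K] V} {U W : Submodule K V}

theorem map_eq_of_mem_invtSubmodule [FiniteDimensional K V]
    (hU : U ∈ Module.End.invtSubmodule g.toLinearMap) : U.map g.toLinearMap = U :=
  Submodule.eq_of_le_of_finrank_eq ((Module.End.mem_invtSubmodule_iff_map_le _).mp hU)
    (LinearEquiv.finrank_map_eq g U)

theorem orthogonal_mem_invtSubmodule_of_isOrthogonal (hg : B.IsOrthogonal g)
    (hU : U.map g.toLinearMap = U) :
    B.orthogonal U ∈ Module.End.invtSubmodule g.toLinearMap := by
  intro x hx y hy
  obtain ⟨u, hu, rfl⟩ := hU.ge hy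
  exact (hg u x).trans (hx u hu)

theorem add_mem_map_subtype_sup_iff (hUW : Disjoint U W) {L : Submodule K U} {M : Submodule K W}
    {u : U} {w : W} : (u + w : V) ∈ L.map U.subtype ⊔ M.map W.subtype ↔ u ∈ L ∧ w ∈ M := by
  refine ⟨fun h ↦ ?_, fun ⟨hu, hw⟩ ↦ Submodule.add_mem_sup ⟨u, hu, rfl⟩ ⟨w, hw, rfl⟩⟩
  obtain ⟨_, ⟨l, hl, rfl⟩, _, ⟨m, hm, rfl⟩, h⟩ := Submodule.mem_sup.mp h
  have hsub : ((l - u : U) : V) = (w - m : W) :=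
    sub_eq_sub_iff_add_eq_add.mpr (by simpa [add_comm] using h)
  have hlu : ((l - u : U) : V) = 0 :=
    Submodule.disjoint_def.mp hUW _ (l - u).2 (hsub ▸ (w - m).2)
  obtain rfl : l = u := by simpa [sub_eq_zero] using hlu
  obtain rfl : w = m := by simpa [sub_eq_zero] using hsub.symm.trans hlu
  exact ⟨hl, hm⟩

theorem orthogonal_map_subtype_sup (hB : B.IsRefl) (hUW : IsCompl U W) (hWU : W ≤ B.orthogonal U)
    (L : Submodule K U) (M : Submodule K W) :
    B.orthogonal (L.map U.subtype ⊔ M.map W.subtype) =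
      ((B.restrict U).orthogonal L).map U.subtype ⊔
        ((B.restrict W).orthogonal M).map W.subtype := by
  have horth {u : U} {w : W} : B u w = 0 := hWU w.2 u u.2
  have horth' {u : U} {w : W} : B w u = 0 := hB _ _ horth
  ext x
  obtain ⟨u, hu, w, hw, rfl⟩ :=
    Submodule.mem_sup.mp (hUW.sup_eq_top ▸ Submodule.mem_top : x ∈ U ⊔ W)
  lift u to U using hu
  lift w to W using hw
  rw [add_mem_map_subtype_sup_iff hUW.disjoint]
  refine ⟨fun h ↦ ⟨fun l hl ↦ ?_, fun m hm ↦ ?_⟩, fun ⟨hu, hw⟩ y hy ↦ ?_⟩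
  · simpa [horth] using h l (Submodule.mem_sup_left ⟨l, hl, rfl⟩)
  · simpa [horth'] using h m (Submodule.mem_sup_right ⟨m, hm, rfl⟩)
  · obtain ⟨_, ⟨l, hl, rfl⟩, _, ⟨m, hm, rfl⟩, rfl⟩ := Submodule.mem_sup.mp hy
    have hlu : B l u = 0 := hu l hl
    have hmw : B m w = 0 := hw m hm
    simp [horth, horth', hlu, hmw]

theorem IsAdaptedLagrangian.map_subtype_sup (hB : B.IsRefl) (hU : U.map g.toLinearMap = U)
    (hW : W.map g.toLinearMap = W) (hUW : IsCompl U W) (hWU : W ≤ B.orthogonal U)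
    {L : Submodule K U} {M : Submodule K W}
    (hL : IsAdaptedLagrangian (B.restrict U) (g.ofSubmodules U U hU) L)
    (hM : IsAdaptedLagrangian (B.restrict W) (g.ofSubmodules W W hW) M) :
    IsAdaptedLagrangian B g (L.map U.subtype ⊔ M.map W.subtype) := by
  refine ⟨?_, Sublattice.sup_mem ?_ ?_, Submodule.disjoint_def.mpr ?_⟩
  · rw [orthogonal_map_subtype_sup hB hUW hWU, hL.orthogonal_eq, hM.orthogonal_eq]
  · rintro _ ⟨l, hl, rfl⟩
    exact ⟨_, hL.mem_invtSubmodule hl, rfl⟩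
  · rintro _ ⟨m, hm, rfl⟩
    exact ⟨_, hM.mem_invtSubmodule hm, rfl⟩
  · rintro _ hx ⟨y, hy, rfl⟩
    obtain ⟨_, ⟨l, hl, rfl⟩, _, ⟨m, hm, rfl⟩, rfl⟩ := Submodule.mem_sup.mp hy
    have hsplit : displacement g (l + m) =
        displacement (g.ofSubmodules U U hU) l + displacement (g.ofSubmodules W W hW) m :=
      map_add _ _ _
    obtain ⟨hDl, hDm⟩ := (add_mem_map_subtype_sup_iff hUW.disjoint).mp (hsplit ▸ hx)
    have hl0 := Submodule.disjoint_def.mp hL.disjoint_map_displacement _ hDl ⟨l, hl, rfl⟩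
    have hm0 := Submodule.disjoint_def.mp hM.disjoint_map_displacement _ hDm ⟨m, hm, rfl⟩
    exact hsplit.trans (by simp [hl0, hm0])

theorem exists_isAdaptedLagrangian [CharP K 2] [FiniteDimensional K V] (hB : B.IsAlt)
    (hB' : B.Nondegenerate) (hg : B.IsOrthogonal g) : ∃ L, IsAdaptedLagrangian B g L := by
  induction hn : Module.finrank K V using Nat.strong_induction_on generalizing V with
  | _ n ih =>
  subst hn
  obtain hV | hV := subsingleton_or_nontrivial V
  · exact ⟨⊥, Subsingleton.elim _ _, Module.End.invtSubmodule.bot_mem _, disjoint_bot_left⟩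
  by_cases hind : IsOrthogonallyIndecomposable B g
  · exact hind.exists_isAdaptedLagrangian hB hB' hg
  obtain ⟨U, hU, hdisj, hU0, hU1⟩ : ∃ U ∈ Module.End.invtSubmodule g.toLinearMap,
      Disjoint U (B.orthogonal U) ∧ U ≠ ⊥ ∧ U ≠ ⊤ := by
    simpa [IsOrthogonallyIndecomposable] using hind
  have hUg := map_eq_of_mem_invtSubmodule hU
  have hWg := map_eq_of_mem_invtSubmodule (orthogonal_mem_invtSubmodule_of_isOrthogonal hg hUg)
  have hcompl := (LinearMap.BilinForm.isCompl_orthogonal_iff_disjoint hB.isRefl).mpr hdisj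
  have hsub {X : Submodule K V} (hX : X ≠ ⊤) (hXdisj : Disjoint X (B.orthogonal X))
      (hXg : X.map g.toLinearMap = X) :
      ∃ L, IsAdaptedLagrangian (B.restrict X) (g.ofSubmodules X X hXg) L :=
    ih _ (Submodule.finrank_lt hX) (fun x ↦ hB x)
      (B.nondegenerate_restrict_of_disjoint_orthogonal hB.isRefl hXdisj) (fun x y ↦ hg x y) rfl
  obtain ⟨L, hL⟩ := hsub hU1 hdisj hUg
  obtain ⟨M, hM⟩ := hsub (fun h ↦ hU0 (by simpa [h] using hcompl.inf_eq_bot))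
    (by rw [LinearMap.BilinForm.orthogonal_orthogonal hB' hB.isRefl]; exact hdisj.symm) hWg
  exact ⟨_, hL.map_subtype_sup hB.isRefl hUg hWg hcompl le_rfl hM⟩

end DirectSum

section SymplecticBasis

variable {K V : Type*} [Field K] [CharP K 2] [AddCommGroup V] [Module K V] {B : BilinForm K V}
  {g : V ≃ₗ[K] V} {L : Submodule K V}

theorem IsAdaptedLagrangian.map_displacement_le_orthogonal (hL : IsAdaptedLagrangian B g L)
    (hg : B.IsOrthogonal g) : L.map (displacement g) ≤ B.orthogonal (L.map (displacement g)) := by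
  rintro _ ⟨y, hy, rfl⟩ _ ⟨x, hx, rfl⟩
  exact (apply_displacement_displacement hg x y).trans
    (hL.orthogonal_eq.ge (hL.mem_invtSubmodule hy) x hx)

theorem exists_symplectic_family [FiniteDimensional K V] (hB : B.IsAlt) (hB' : B.Nondegenerate)
    (hg : B.IsOrthogonal g) {n : ℕ} (hn : Module.finrank K V = n + n) :
    ∃ e f : Fin n → V, (∀ i j, B (e i) (e j) = 0) ∧ (∀ i j, B (f i) (f j) = 0) ∧
      (∀ i j, B (e i) (f j) = if i = j then 1 else 0) ∧
      ∀ i j, B (g (e i)) (f j) = if i = j then 1 else 0 := by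
  obtain ⟨L, hL⟩ := exists_isAdaptedLagrangian hB hB' hg
  obtain ⟨M, hDM, hM, hLM⟩ := exists_isCompl_isotropic hB hB' hL.orthogonal_eq
    (hL.map_displacement_le_orthogonal hg) hL.disjoint_map_displacement
  obtain ⟨e, f, he, hf, hef⟩ := exists_dual_family hB' hL.orthogonal_eq hLM hn
  refine ⟨e, f, fun i j ↦ hL.orthogonal_eq.ge (he j) _ (he i), fun i j ↦ hM (hf j) _ (hf i), hef,
    fun i j ↦ ?_⟩
  have hge : g (e i) = e i + displacement g (e i) := by rw [displacement_apply, add_sub_cancel]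
  have hDf : B (displacement g (e i)) (f j) = 0 := hM (hf j) _ (hDM ⟨e i, he i, rfl⟩)
  rw [hge, map_add, LinearMap.add_apply, hDf, add_zero, hef]

end SymplecticBasis

section Matrix

variable {K : Type*} [Field K] {n : ℕ} {P Q : Matrix (Fin n ⊕ Fin n) (Fin n ⊕ Fin n) K}

theorem sympJ_eq_neg_J : sympJ n K = -J (Fin n) K := by
  simp [sympJ, J, fromBlocks_neg]

theorem isSymplectic_iff_mem_symplecticGroup : IsSymplectic P ↔ P ∈ symplecticGroup (Fin n) K := by
  simp [IsSymplectic, sympJ_eq_neg_J, SymplecticGroup.mem_iff]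

/-- The bilinear form `(x, y) ↦ x G yᵀ` on row vectors, of which `G` is the Gram matrix. -/
def sympForm (n : ℕ) (K : Type*) [Field K] : BilinForm K (Fin n ⊕ Fin n → K) :=
  toBilin' (sympJ n K)

theorem isAlt_sympForm : (sympForm n K).IsAlt := by
  intro x
  rw [sympForm, toBilin'_apply', sympJ, fromBlocks_mulVec]
  simp [dotProduct, neg_mulVec, mul_comm]

theorem nondegenerate_sympForm : (sympForm n K).Nondegenerate :=
  LinearMap.BilinForm.nondegenerate_toBilin'_of_det_ne_zero' _
    (by simpa [sympJ_eq_neg_J, det_neg] using (isUnit_det_J (Fin n) K).ne_zero)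

theorem mul_sympJ_mul_transpose_apply (A C : Matrix (Fin n ⊕ Fin n) (Fin n ⊕ Fin n) K)
    (a b : Fin n ⊕ Fin n) : (A * sympJ n K * Cᵀ) a b = sympForm n K (A a) (C b) := by
  rw [sympForm, toBilin'_apply', dotProduct_mulVec]
  rfl

theorem IsSymplectic.sympForm_vecMul_vecMul (hP : IsSymplectic P) (x y : Fin n ⊕ Fin n → K) :
    sympForm n K (x ᵥ* P) (y ᵥ* P) = sympForm n K x y := by
  rw [sympForm, toBilin'_apply', toBilin'_apply', ← mulVec_transpose P y, ← dotProduct_mulVec,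
    mulVec_mulVec, mulVec_mulVec, hP]

theorem isSymplectic_of_sumElim {e f : Fin n → Fin n ⊕ Fin n → K}
    (hee : ∀ i j, sympForm n K (e i) (e j) = 0) (hff : ∀ i j, sympForm n K (f i) (f j) = 0)
    (hef : ∀ i j, sympForm n K (e i) (f j) = if i = j then 1 else 0) :
    IsSymplectic (of (Sum.elim e f)) := by
  have hfe (i j : Fin n) : sympForm n K (f i) (e j) = if i = j then -1 else 0 := by
    rw [← isAlt_sympForm.neg_eq, hef, eq_comm, neg_ite, neg_zero]
    simp only [eq_comm]
  ext a b
  refine (mul_sympJ_mul_transpose_apply _ _ a b).trans ?_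
  change sympForm n K (Sum.elim e f a) (Sum.elim e f b) = _
  rcases a with i | i <;> rcases b with j | j
  · simp [sympJ, hee]
  · simp [sympJ, hef, one_apply]
  · simp [sympJ, hfe, one_apply, neg_ite]
  · simp [sympJ, hff]

theorem IsSymplectic.toBlocks₁₁_conj (hQ : IsSymplectic Q)
    (P : Matrix (Fin n ⊕ Fin n) (Fin n ⊕ Fin n) K) :
    (Q * P * Q⁻¹).toBlocks₁₁ = (Q * P * sympJ n K * Qᵀ).toBlocks₁₂ := by
  have hinv : Q⁻¹ = -(sympJ n K * Qᵀ * sympJ n K) := by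
    simpa [sympJ_eq_neg_J] using
      SymplecticGroup.inv_eq_symplectic_inv Q (isSymplectic_iff_mem_symplecticGroup.mp hQ)
  have hconj : Q * P * Q⁻¹ = -(Q * P * sympJ n K * Qᵀ * sympJ n K) := by
    simp only [hinv, Matrix.mul_neg, Matrix.mul_assoc]
  rw [hconj, ← fromBlocks_toBlocks (Q * P * sympJ n K * Qᵀ), sympJ, fromBlocks_multiply,
    fromBlocks_neg, toBlocks_fromBlocks₁₁, toBlocks_fromBlocks₁₂]
  simp

end Matrix

theorem principal_corner_identity_char_two_general {K : Type*} [Field K] [CharP K 2] {n : ℕ}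
    (P : Matrix (Fin n ⊕ Fin n) (Fin n ⊕ Fin n) K) (hP : IsSymplectic P) :
    ∃ Q : Matrix (Fin n ⊕ Fin n) (Fin n ⊕ Fin n) K, IsSymplectic Q ∧
      (Q * P * Q⁻¹).toBlocks₁₁ = (1 : Matrix (Fin n) (Fin n) K) := by
  have hdet : IsUnit P.det :=
    SymplecticGroup.symplectic_det (isSymplectic_iff_mem_symplecticGroup.mp hP)
  let g := toLinearEquivRight'OfInv (nonsing_inv_mul P hdet) (mul_nonsing_inv P hdet)
  obtain ⟨e, f, hee, hff, hef, hgef⟩ := exists_symplectic_family isAlt_sympForm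
    nondegenerate_sympForm (g := g) hP.sympForm_vecMul_vecMul (n := n) (by simp)
  have hQ := isSymplectic_of_sumElim hee hff hef
  refine ⟨of (Sum.elim e f), hQ, ?_⟩
  rw [hQ.toBlocks₁₁_conj]
  ext i j
  exact (mul_sympJ_mul_transpose_apply _ _ _ _).trans ((hgef i j).trans (one_apply).symm)

theorem principal_corner_identity_char_two {K : Type*} [Field K] [CharP K 2] {n : ℕ}
    (hn : 2 ≤ n)
    (P : Matrix (Fin n ⊕ Fin n) (Fin n ⊕ Fin n) K) (hP : IsSymplectic P)
    (hns : ∀ c : K, P ≠ c • (1 : Matrix (Fin n ⊕ Fin n) (Fin n ⊕ Fin n) K)) :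
    ∃ Q : Matrix (Fin n ⊕ Fin n) (Fin n ⊕ Fin n) K, IsSymplectic Q ∧
      (Q * P * Q⁻¹).toBlocks₁₁ = (1 : Matrix (Fin n) (Fin n) K) :=
  principal_corner_identity_char_two_general P hP
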